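/- Let A be a brick-finite finite-dimensional algebra over an algebraically closed field and let 𝒳 be a Hom-orthogonal set of finite-dimensional A-modules. Then the cardinality of 𝒳 is at most the number of isomorphism classes of simple A-modules that occur as a composition factor (Jordan–Hölder factor) of some module belonging to 𝒳. -/

import Mathlib

universe u v

open Module

/-- A finite-dimensional left module over the `k`-algebra `A`. -/
structure FDMod (k A : Type u) [Field k] [Ring A] [Algebra k A] : Type (u + 1) where
  carrier : Type u
  [addCommGroup : AddCommGroup carrier]
  [moduleK : Module k carrier]
  [moduleA : Module A carrier]
  [tower : IsScalarTower k A carrier]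
  [fd : FiniteDimensional k carrier]

attribute [instance] FDMod.addCommGroup FDMod.moduleK FDMod.moduleA FDMod.tower FDMod.fd

variable {k A : Type u} [Field k] [Ring A] [Algebra k A]

/-- `M` is a brick: `M ≠ 0` and every `A`-endomorphism of `M` is a `k`-scalar,
i.e. `End_A(M) ≅ k`. -/
def FDMod.IsBrick (M : FDMod k A) : Prop :=
  Nontrivial M.carrier ∧ ∀ f : M.carrier →ₗ[A] M.carrier, ∃ c : k, ∀ x : M.carrier, f x = c • x

/-- `M` and `N` are Hom-orthogonal: `Hom_A(M,N) = 0` and `Hom_A(N,M) = 0`. -/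
def FDMod.HomOrth (M N : FDMod k A) : Prop :=
  (∀ f : M.carrier →ₗ[A] N.carrier, f = 0) ∧ (∀ f : N.carrier →ₗ[A] M.carrier, f = 0)

/-- `M` and `N` are isomorphic as `A`-modules. -/
def FDMod.Iso (M N : FDMod k A) : Prop :=
  Nonempty (M.carrier ≃ₗ[A] N.carrier)

/-- A family of modules forms a Hom-orthogonal set: the modules are nonzero,
pairwise non-isomorphic and pairwise Hom-orthogonal. -/
def HomOrthFamily {I : Type v} (X : I → FDMod k A) : Prop :=
  (∀ i, Nontrivial (X i).carrier) ∧
  (∀ i j, i ≠ j → ¬(X i).Iso (X j)) ∧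
  (∀ i j, i ≠ j → (X i).HomOrth (X j))

/-- `A` is brick-finite: there are only finitely many isomorphism classes of bricks. -/
def BrickFinite (k A : Type u) [Field k] [Ring A] [Algebra k A] : Prop :=
  ∃ (m : ℕ) (f : Fin m → FDMod k A), ∀ N : FDMod k A, N.IsBrick → ∃ i, N.Iso (f i)

/-- `A` has rank `n`: there are exactly `n` isomorphism classes of simple modules. -/
def HasRank (k A : Type u) [Field k] [Ring A] [Algebra k A] (n : ℕ) : Prop :=
  ∃ S : Fin n → FDMod k A,
    (∀ i, IsSimpleModule A (S i).carrier) ∧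
    (∀ i j, i ≠ j → ¬(S i).Iso (S j)) ∧
    (∀ T : FDMod k A, IsSimpleModule A T.carrier → ∃ i, T.Iso (S i))

/-- `S` is a (simple) subquotient of `X`, i.e. `S` occurs as a composition factor
of `X` when `S` is simple and `X` has finite length. -/
def FDMod.IsSubquotientOf {k A : Type u} [Field k] [Ring A] [Algebra k A]
    (S X : FDMod k A) : Prop :=
  ∃ (q : Submodule A X.carrier) (p : Submodule A q), Nonempty ((q ⧸ p) ≃ₗ[A] S.carrier)


namespace HO

theorem fdSub {k A : Type u} [Field k] [Ring A] [Algebra k A] {M : Type u} [AddCommGroup M]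
    [Module k M] [Module A M] [IsScalarTower k A M] [FiniteDimensional k M]
    (p : Submodule A M) : FiniteDimensional k p :=
  inferInstanceAs (FiniteDimensional k (p.restrictScalars k))

theorem fdQuo {k A : Type u} [Field k] [Ring A] [Algebra k A] {M : Type u} [AddCommGroup M]
    [Module k M] [Module A M] [IsScalarTower k A M] [FiniteDimensional k M]
    (p : Submodule A M) : FiniteDimensional k (M ⧸ p) :=
  Module.Finite.of_surjective (p.mkQ.restrictScalars k) p.mkQ_surjective

/-- submodule as an `FDMod` -/
abbrev sub {k A : Type u} [Field k] [Ring A] [Algebra k A] {M : FDMod k A}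
    (p : Submodule A M.carrier) : FDMod k A :=
  haveI := fdSub (k := k) p
  ⟨p⟩

/-- quotient as an `FDMod` -/
abbrev quo {k A : Type u} [Field k] [Ring A] [Algebra k A] {M : FDMod k A}
    (p : Submodule A M.carrier) : FDMod k A :=
  haveI := fdQuo (k := k) p
  ⟨M.carrier ⧸ p⟩

/-- binary product -/
abbrev prd {k A : Type u} [Field k] [Ring A] [Algebra k A] (M N : FDMod k A) : FDMod k A :=
  ⟨M.carrier × N.carrier⟩

/-- finite product -/
abbrev pi {k A : Type u} [Field k] [Ring A] [Algebra k A] {n : ℕ} (M : Fin n → FDMod k A) :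
    FDMod k A :=
  ⟨∀ i, (M i).carrier⟩

/-- free module -/
abbrev free (k A : Type u) [Field k] [Ring A] [Algebra k A] [FiniteDimensional k A] (n : ℕ) :
    FDMod k A :=
  ⟨Fin n → A⟩

instance noeth {k A : Type u} [Field k] [Ring A] [Algebra k A] (M : FDMod k A) :
    IsNoetherian A M.carrier := isNoetherian_of_tower k inferInstance

instance artin {k A : Type u} [Field k] [Ring A] [Algebra k A] (M : FDMod k A) :
    IsArtinian A M.carrier := isArtinian_of_tower k inferInstance

/-- dimension -/
noncomputable abbrev dm {k A : Type u} [Field k] [Ring A] [Algebra k A] (M : FDMod k A) : ℕ :=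
  finrank k M.carrier

/-- A torsion class. -/
structure IsTors {k A : Type u} [Field k] [Ring A] [Algebra k A] (T : FDMod k A → Prop) : Prop where
  quot : ∀ {X Y : FDMod k A} (f : X.carrier →ₗ[A] Y.carrier), Function.Surjective f → T X → T Y
  ext : ∀ {X Y Z : FDMod k A} (f : X.carrier →ₗ[A] Y.carrier) (g : Y.carrier →ₗ[A] Z.carrier),
    Function.Surjective g → (∀ y, g y = 0 ↔ ∃ x, f x = y) → T X → T Z → T Y
  zero : ∀ X : FDMod k A, Subsingleton X.carrier → T X

/-- relative projectivity -/
def ExtProj {k A : Type u} [Field k] [Ring A] [Algebra k A] (T : FDMod k A → Prop)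
    (Q : FDMod k A) : Prop :=
  ∀ {Y Z : FDMod k A} (g : Y.carrier →ₗ[A] Z.carrier), Function.Surjective g →
    T (sub (LinearMap.ker g)) → ∀ h : Q.carrier →ₗ[A] Z.carrier,
    ∃ lift : Q.carrier →ₗ[A] Y.carrier, ∀ x, g (lift x) = h x

/-- every object is a quotient of a relative projective -/
def Enough0 {k A : Type u} [Field k] [Ring A] [Algebra k A] (T : FDMod k A → Prop) : Prop :=
  ∀ M, T M → ∃ Q, T Q ∧ ExtProj T Q ∧
    ∃ φ : Q.carrier →ₗ[A] M.carrier, Function.Surjective φ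

/-- enough relative projectives -/
def Enough {k A : Type u} [Field k] [Ring A] [Algebra k A] (T : FDMod k A → Prop) : Prop :=
  ∀ M, T M → ∃ Q, T Q ∧ ExtProj T Q ∧
    ∃ φ : Q.carrier →ₗ[A] M.carrier, Function.Surjective φ ∧ T (sub (LinearMap.ker φ))

section
variable {k A : Type u} [Field k] [Ring A] [Algebra k A]

theorem sub_dm_lt {M : FDMod k A} (p : Submodule A M.carrier) (hp : p ≠ ⊤) :
    dm (sub p) < dm M := by
  have : p.restrictScalars k < ⊤ := by
    rw [lt_top_iff_ne_top]; intro h; exact hp (by simpa using h)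
  exact Submodule.finrank_lt this.ne

theorem sub_dm_lt_sub {M : FDMod k A} (p q : Submodule A M.carrier) (hp : p < q) :
    dm (sub p) < dm (sub q) :=
  Submodule.finrank_lt_finrank_of_lt (s := p.restrictScalars k) (t := q.restrictScalars k) hp

theorem IsTors.sub_of_range {T : FDMod k A → Prop} (hT : IsTors T) {X Y : FDMod k A}
    (f : X.carrier →ₗ[A] Y.carrier) (hX : T X) (p : Submodule A Y.carrier)
    (hp : LinearMap.range f = p) : T (sub p) := by
  subst hp
  exact hT.quot (X := X) (Y := sub (LinearMap.range f)) f.rangeRestrict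
    f.surjective_rangeRestrict hX

/-- relative torsion radical -/
theorem IsTors.radical {T : FDMod k A → Prop} (hT : IsTors T) {Q : FDMod k A}
    (X : Submodule A Q.carrier) :
    ∃ t : Submodule A Q.carrier, t ≤ X ∧ T (sub t) ∧
      ∀ Y : FDMod k A, T Y → ∀ f : Y.carrier →ₗ[A] (Q.carrier ⧸ t),
        LinearMap.range f ≤ X.map t.mkQ → f = 0 := by
  have hne : {t : Submodule A Q.carrier | t ≤ X ∧ T (sub t)}.Nonempty :=
    ⟨⊥, bot_le, hT.zero _ (by infer_instance)⟩
  obtain ⟨t, ⟨htX, htT⟩, hmax⟩ := (wellFounded_gt (α := Submodule A Q.carrier)).has_min _ hne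
  refine ⟨t, htX, htT, fun Y hY f hf => ?_⟩
  set s : Submodule A Q.carrier := (LinearMap.range f).comap t.mkQ with hs
  have hts : t ≤ s := by
    intro x hx
    have : t.mkQ x = 0 := by simpa using hx
    simp only [hs, Submodule.mem_comap, this, zero_mem]
  have hsX : s ≤ X := by
    intro x hx
    obtain ⟨y, hy, hxy⟩ := hf hx
    have : x - y ∈ t := by
      rw [← Submodule.Quotient.eq]; exact hxy.symm
    have := X.add_mem (htX this) hy
    simpa using this
  have hsT : T (sub s) := by
    let g : s →ₗ[A] LinearMap.range f := (t.mkQ.comp s.subtype).codRestrict _ (fun x => x.2)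
    refine hT.ext (X := sub t) (Y := sub s) (Z := sub (M := quo t) (LinearMap.range f))
      (Submodule.inclusion hts) g ?_ ?_ htT (hT.sub_of_range (Y := quo t) f hY _ rfl)
    · rintro ⟨y, hy⟩
      obtain ⟨x, rfl⟩ := t.mkQ_surjective y
      exact ⟨⟨x, hy⟩, rfl⟩
    · rintro ⟨y, hy⟩
      constructor
      · intro h
        have h2 : t.mkQ y = 0 := congrArg Subtype.val h
        have : y ∈ t := by simpa using h2
        exact ⟨⟨y, this⟩, rfl⟩
      · rintro ⟨⟨x, hx⟩, h⟩
        have : x = y := congrArg Subtype.val h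
        subst this
        apply Subtype.ext
        change t.mkQ x = 0
        simpa using hx
  have hst : s = t := by
    by_contra h
    exact hmax s ⟨hsX, hsT⟩ (lt_of_le_of_ne hts (Ne.symm h))
  ext y
  obtain ⟨x, hx⟩ := t.mkQ_surjective (f y)
  have : x ∈ s := by
    simp only [hs, Submodule.mem_comap, hx]; exact ⟨y, rfl⟩
  rw [hst] at this
  rw [← hx]; simpa using this

/-- left orthogonal inside a torsion class -/
theorem IsTors.inter_perp {T : FDMod k A → Prop} (hT : IsTors T) (P : FDMod k A → Prop) :
    IsTors (fun X => T X ∧ ∀ N, P N → ∀ f : X.carrier →ₗ[A] N.carrier, f = 0) where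
  quot := by
    rintro X Y f hf ⟨h1, h2⟩
    refine ⟨hT.quot f hf h1, fun N hN g => ?_⟩
    have := h2 N hN (g ∘ₗ f)
    ext y
    obtain ⟨x, rfl⟩ := hf y
    exact LinearMap.congr_fun this x
  ext := by
    rintro X Y Z f g hg hex ⟨hX, hX2⟩ ⟨hZ, hZ2⟩
    refine ⟨hT.ext f g hg hex hX hZ, fun N hN h => ?_⟩
    have h0 := hX2 N hN (h ∘ₗ f)
    have hk : LinearMap.ker g ≤ LinearMap.ker h := by
      intro y hy
      obtain ⟨x, rfl⟩ := (hex y).1 hy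
      exact LinearMap.congr_fun h0 x
    have h1 := hZ2 N hN (((LinearMap.ker g).liftQ h hk) ∘ₗ (g.quotKerEquivOfSurjective hg).symm.toLinearMap)
    ext y
    have := LinearMap.congr_fun h1 (g y)
    have e : (g.quotKerEquivOfSurjective hg).symm (g y) = Submodule.Quotient.mk y := by
      rw [LinearEquiv.symm_apply_eq]; simp
    simp only [LinearMap.comp_apply, LinearEquiv.coe_coe, e] at this
    simpa using this
  zero := by
    intro X hX
    exact ⟨hT.zero X hX, fun N _ f => by ext x; rw [Subsingleton.elim x 0]; simp⟩

theorem isTors_top : IsTors (fun _ : FDMod k A => True) :=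
  ⟨fun _ _ _ => trivial, fun _ _ _ _ _ _ => trivial, fun _ _ => trivial⟩

theorem IsTors.pi_mem {T : FDMod k A → Prop} (hT : IsTors T) {n : ℕ} (M : Fin n → FDMod k A)
    (hM : ∀ i, T (M i)) : T (pi M) := by
  obtain ⟨t, -, ht, h⟩ := hT.radical (Q := pi M) ⊤
  have : t = ⊤ := by
    rw [eq_top_iff, ← LinearMap.iSup_range_single (R := A) (φ := fun i => (M i).carrier)]
    refine iSup_le fun i => ?_
    rintro _ ⟨x, rfl⟩
    have := h (M i) (hM i) (t.mkQ ∘ₗ LinearMap.single A (fun i => (M i).carrier) i)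
      (by rw [Submodule.map_top, Submodule.range_mkQ]; exact le_top)
    have := LinearMap.congr_fun this x
    simpa using this
  subst this
  exact hT.quot (X := sub ⊤) (Y := pi M) (Submodule.subtype ⊤) (fun x => ⟨⟨x, trivial⟩, rfl⟩) ht

theorem IsTors.prd_mem {T : FDMod k A → Prop} (hT : IsTors T) {M N : FDMod k A}
    (hM : T M) (hN : T N) : T (prd M N) :=
  hT.ext (X := M) (Y := prd M N) (Z := N) (LinearMap.inl A _ _) (LinearMap.snd A _ _)
    LinearMap.snd_surjective (by
      rintro ⟨a, b⟩
      constructor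
      · rintro h; exact ⟨a, by simpa using h.symm⟩
      · rintro ⟨x, h⟩; simp at h; simp [h.2]) hM hN

theorem ExtProj.mono {T T' : FDMod k A → Prop} (h : ∀ X, T X → T' X) {Q : FDMod k A}
    (hQ : ExtProj T' Q) : ExtProj T Q :=
  fun g hg hk => hQ g hg (h _ hk)

theorem ExtProj.pi_mem {T : FDMod k A → Prop} {n : ℕ} (M : Fin n → FDMod k A)
    (hM : ∀ i, ExtProj T (M i)) : ExtProj T (pi M) := by
  intro Y Z g hg hk h
  choose l hl using fun i => hM i g hg hk (h ∘ₗ LinearMap.single A (fun i => (M i).carrier) i)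
  refine ⟨LinearMap.lsum A (fun i => (M i).carrier) ℕ l, fun x => ?_⟩
  simp only [LinearMap.lsum_apply, LinearMap.coe_sum, Finset.sum_apply, LinearMap.comp_apply, map_sum,
    LinearMap.proj_apply]
  simp only [hl, LinearMap.comp_apply, ← map_sum]
  congr 1
  exact LinearMap.sum_single_apply  _ x

theorem ExtProj.prd_mem {T : FDMod k A → Prop} {M N : FDMod k A}
    (hM : ExtProj T M) (hN : ExtProj T N) : ExtProj T (prd M N) := by
  intro Y Z g hg hk h
  obtain ⟨a, ha⟩ := hM g hg hk (h ∘ₗ LinearMap.inl A _ _)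
  obtain ⟨b, hb⟩ := hN g hg hk (h ∘ₗ LinearMap.inr A _ _)
  refine ⟨a.coprod b, ?_⟩
  rintro ⟨x, y⟩
  have e : ((x, y) : M.carrier × N.carrier)
      = LinearMap.inl A _ _ x + LinearMap.inr A _ _ y := by simp
  change g (a x + b y) = h (x, y)
  rw [e, map_add, map_add, ha, hb]; rfl

theorem ExtProj.retract {T : FDMod k A → Prop} {M N : FDMod k A} (hM : ExtProj T M)
    (i : N.carrier →ₗ[A] M.carrier) (r : M.carrier →ₗ[A] N.carrier) (hri : ∀ x, r (i x) = x) :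
    ExtProj T N := by
  intro Y Z g hg hk h
  obtain ⟨a, ha⟩ := hM g hg hk (h ∘ₗ r)
  exact ⟨a ∘ₗ i, fun x => by simp [ha, hri]⟩

/-- A form of the Fitting lemma. -/
theorem fitting {Q : FDMod k A} (η : Q.carrier →ₗ[A] Q.carrier) :
    ∃ e : Q.carrier →ₗ[A] Q.carrier, (∀ x, e (e x) = e x) ∧
      LinearMap.range e ≤ LinearMap.range η ∧
      ∀ (M : FDMod k A) (φ : Q.carrier →ₗ[A] M.carrier), (∀ x, φ (η x) = φ x) →
        ∀ x, φ (e x) = φ x := by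
  obtain ⟨n, hn⟩ := Filter.eventually_atTop.1 (LinearMap.eventually_isCompl_ker_pow_range_pow η)
  have hc := (hn (n + 1) (by omega)).symm
  refine ⟨(Submodule.projection _ _ hc), ?_, ?_, ?_⟩
  · intro x
    simp
  · intro x hx
    obtain ⟨y, rfl⟩ := hx
    have : (Submodule.projection _ _ hc) y ∈ LinearMap.range (η ^ (n+1)) := by simp
    obtain ⟨z, hz⟩ := this
    rw [← hz, pow_succ']
    exact ⟨_, rfl⟩
  · intro M φ h x
    have hp : ∀ m y, φ ((η ^ m) y) = φ y := by
      intro m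
      induction m with
      | zero => simp
      | succ m ih => intro y; rw [pow_succ, Module.End.mul_apply, ih, h]
    have : x - (Submodule.projection _ _ hc) x ∈ LinearMap.ker (η ^ (n+1)) := by
      exact Submodule.sub_projection_mem hc x
    have h2 := hp (n+1) (x - (Submodule.projection _ _ hc) x)
    rw [LinearMap.mem_ker.1 this, map_zero, map_sub] at h2
    exact (sub_eq_zero.1 h2.symm).symm

end
end HO

namespace HO
section
variable {k A : Type u} [Field k] [Ring A] [Algebra k A]

instance homFin (M N : FDMod k A) : Module.Finite k (M.carrier →ₗ[A] N.carrier) :=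
  Module.Finite.of_injective (LinearMap.restrictScalarsₗ k A M.carrier N.carrier k)
    (LinearMap.restrictScalars_injective k)

/-- The key minimal object in the difference of two torsion classes. -/
theorem exists_min {T1 T2 : FDMod k A → Prop} (h1 : IsTors T1) (h2 : IsTors T2)
    {X : FDMod k A} (hX2 : T2 X) (hX1 : ¬ T1 X) :
    ∃ B : FDMod k A, T2 B ∧ Nontrivial B.carrier ∧
      (∀ Y, T1 Y → ∀ f : Y.carrier →ₗ[A] B.carrier, f = 0) ∧
      (∀ Z, T2 Z → ∀ g : Z.carrier →ₗ[A] B.carrier, g ≠ 0 → Function.Surjective g) := by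
  classical
  have hex : ∃ n : ℕ, ∃ B : FDMod k A, dm B = n ∧ T2 B ∧ Nontrivial B.carrier ∧
      (∀ Y, T1 Y → ∀ f : Y.carrier →ₗ[A] B.carrier, f = 0) := by
    obtain ⟨t, -, ht, h⟩ := h1.radical (Q := X) ⊤
    refine ⟨_, quo t, rfl, h2.quot (X := X) (Y := quo t) t.mkQ t.mkQ_surjective hX2, ?_,
      fun Y hY f => h Y hY f ?_⟩
    · rw [Submodule.Quotient.nontrivial_iff]
      rintro rfl
      exact hX1 (h1.quot (X := sub ⊤) (Y := X) (Submodule.subtype ⊤)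
        (fun x => ⟨⟨x, trivial⟩, rfl⟩) ht)
    · rw [Submodule.map_top, Submodule.range_mkQ]; exact le_top
  obtain ⟨B, hBn, hB2, hBnt, hB1⟩ := Nat.find_spec hex
  refine ⟨B, hB2, hBnt, hB1, fun Z hZ g hg => ?_⟩
  by_contra hns
  have hr : LinearMap.range g ≠ ⊤ := fun h => hns (LinearMap.range_eq_top.1 h)
  have hlt := sub_dm_lt _ hr
  rw [hBn] at hlt
  refine Nat.find_min hex hlt ⟨sub (LinearMap.range g), rfl, h2.sub_of_range g hZ _ rfl, ?_, ?_⟩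
  · rw [Submodule.nontrivial_iff_ne_bot]
    intro h; exact hg (LinearMap.range_eq_bot.1 h)
  · intro Y hY f
    have := hB1 Y hY ((LinearMap.range g).subtype ∘ₗ f)
    ext y
    exact LinearMap.congr_fun this y

theorem isBrick_of [IsAlgClosed k] {B : FDMod k A} (hn : Nontrivial B.carrier)
    (h : ∀ g : B.carrier →ₗ[A] B.carrier, g ≠ 0 → Function.Surjective g) : B.IsBrick := by
  refine ⟨hn, fun f => ?_⟩
  obtain ⟨c, hc⟩ := Module.End.exists_eigenvalue (K := k) (f.restrictScalars k)
  obtain ⟨v, hv⟩ := hc.exists_hasEigenvector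
  refine ⟨c, fun x => ?_⟩
  by_cases h0 : f - c • LinearMap.id = 0
  · have := LinearMap.congr_fun h0 x
    simpa [sub_eq_zero] using this
  · exfalso
    have hs := h _ h0
    have hi : Function.Injective ((f - c • LinearMap.id : B.carrier →ₗ[A] B.carrier).restrictScalars k) :=
      LinearMap.injective_iff_surjective.2 hs
    apply hv.2
    apply hi
    have := hv.apply_eq_smul
    simp only [LinearMap.restrictScalars_apply] at this
    simp [this]

theorem le_of_bricks [IsAlgClosed k] {m : ℕ} {f : Fin m → FDMod k A}
    (hf : ∀ N : FDMod k A, N.IsBrick → ∃ i, N.Iso (f i))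
    {T1 T2 : FDMod k A → Prop} (h1 : IsTors T1) (h2 : IsTors T2)
    (hb : ∀ i, T2 (f i) → T1 (f i)) : ∀ X, T2 X → T1 X := by
  intro X hX
  by_contra hX1
  obtain ⟨B, hB2, hn, hB1, hs⟩ := exists_min h1 h2 hX hX1
  obtain ⟨i, ⟨e⟩⟩ := hf B (isBrick_of hn (hs B hB2))
  have : T1 B := h1.quot e.symm.toLinearMap e.symm.surjective
    (hb i (h2.quot e.toLinearMap e.surjective hB2))
  have h0 := hB1 B this LinearMap.id
  obtain ⟨x, hx⟩ := exists_ne (0 : B.carrier)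
  exact hx (LinearMap.congr_fun h0 x)

/-- modules generated by `Q` -/
def Fac (Q X : FDMod k A) : Prop :=
  ∃ (n : ℕ) (φ : (Fin n → Q.carrier) →ₗ[A] X.carrier), Function.Surjective φ

theorem fac_le {T : FDMod k A → Prop} (hT : IsTors T) {Q : FDMod k A} (hQ : T Q) :
    ∀ X, Fac Q X → T X := by
  rintro X ⟨n, φ, hφ⟩
  exact hT.quot (X := pi fun _ : Fin n => Q) φ hφ (hT.pi_mem _ fun _ => hQ)

theorem fac_isTors {T : FDMod k A → Prop} (hT : IsTors T) {Q : FDMod k A} (hQ : T Q)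
    (hQ' : ExtProj T Q) : IsTors (Fac Q) where
  quot := by
    rintro X Y f hf ⟨n, φ, hφ⟩
    exact ⟨n, f ∘ₗ φ, hf.comp hφ⟩
  zero := by
    intro X hX
    exact ⟨0, 0, fun x => ⟨0, Subsingleton.elim _ _⟩⟩
  ext := by
    intro X Y Z f g hg hex hX hZ
    have hk : T (sub (LinearMap.ker g)) := hT.sub_of_range f (fac_le hT hQ X hX) _ (by
      ext y; simp [hex])
    obtain ⟨n, φ, hφ⟩ := hX
    obtain ⟨m, ψ, hψ⟩ := hZ
    obtain ⟨l, hl⟩ := ExtProj.pi_mem (fun _ : Fin m => Q) (fun _ => hQ') g hg hk ψ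
    refine ⟨n + m, f ∘ₗ φ ∘ₗ LinearMap.funLeft A Q.carrier (Fin.castAdd m) +
      l ∘ₗ LinearMap.funLeft A Q.carrier (Fin.natAdd n), fun y => ?_⟩
    obtain ⟨b, hb⟩ := hψ (g y)
    have : g (y - l b) = 0 := by rw [map_sub, hl, hb, sub_self]
    obtain ⟨x, hx⟩ := (hex _).1 this
    obtain ⟨a, rfl⟩ := hφ x
    refine ⟨Fin.append a b, ?_⟩
    have e1 : LinearMap.funLeft A Q.carrier (Fin.castAdd m) (Fin.append a b) = a := by
      ext i; simp [LinearMap.funLeft_apply]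
    have e2 : LinearMap.funLeft A Q.carrier (Fin.natAdd n) (Fin.append a b) = b := by
      ext i; simp [LinearMap.funLeft_apply]
    simp only [LinearMap.add_apply, LinearMap.comp_apply, e1, e2, hx]
    exact sub_add_cancel _ _

theorem enough_of_fac {T : FDMod k A → Prop} (hT : IsTors T) {Q0 : FDMod k A} (hQ0 : T Q0)
    (hQ0' : ExtProj T Q0) (hfac : ∀ X, T X → Fac Q0 X) : Enough T := by
  classical
  let b := Module.finBasis k Q0.carrier
  let P0 : FDMod k A := pi fun _ : Fin (finrank k Q0.carrier) => Q0
  have hP0 : T P0 := hT.pi_mem _ fun _ => hQ0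
  have hP0' : ExtProj T P0 := ExtProj.pi_mem _ fun _ => hQ0'
  let e : P0.carrier := fun i => b i
  have huniv : ∀ X, T X → ∀ x : X.carrier, ∃ β : P0.carrier →ₗ[A] X.carrier, β e = x := by
    intro X hX x
    obtain ⟨n, φ, hφ⟩ := hfac X hX
    obtain ⟨q, rfl⟩ := hφ x
    refine ⟨φ ∘ₗ LinearMap.pi (fun l => ∑ i, (b.repr (q l) i) •
      (LinearMap.proj i : (Fin (finrank k Q0.carrier) → Q0.carrier) →ₗ[A] Q0.carrier)), ?_⟩
    rw [LinearMap.comp_apply]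
    congr 1
    ext l
    rw [LinearMap.pi_apply, LinearMap.sum_apply]
    exact b.sum_repr (q l)
  let P1 : FDMod k A := quo (Submodule.span A {e})
  let p : P0.carrier →ₗ[A] P1.carrier := (Submodule.span A {e}).mkQ
  have hp : Function.Surjective p := Submodule.mkQ_surjective _
  have hpe : p e = 0 :=
    (Submodule.Quotient.mk_eq_zero (Submodule.span A {e})).2
      (Submodule.mem_span_singleton_self e)
  have hfactor : ∀ (Y : FDMod k A) (l : P0.carrier →ₗ[A] Y.carrier), l e = 0 →
      ∃ l' : P1.carrier →ₗ[A] Y.carrier, ∀ x, l' (p x) = l x := by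
    intro Y l hl
    refine ⟨(Submodule.span A {e}).liftQ l ?_, fun x => rfl⟩
    rw [Submodule.span_singleton_le_iff_mem]; exact hl
  have hP1 : T P1 := hT.quot p hp hP0
  have hP1' : ExtProj T P1 := by
    intro Y Z g hg hk h
    obtain ⟨l, hl⟩ := hP0' g hg hk (h ∘ₗ p)
    have hle : l e ∈ LinearMap.ker g := by
      rw [LinearMap.mem_ker, hl, LinearMap.comp_apply, hpe, map_zero]
    obtain ⟨β, hβ⟩ := huniv _ hk ⟨l e, hle⟩
    obtain ⟨l', hl'⟩ := hfactor Y (l - (LinearMap.ker g).subtype ∘ₗ β) (by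
      rw [LinearMap.sub_apply, LinearMap.comp_apply, hβ]; exact sub_self _)
    refine ⟨l', fun x => ?_⟩
    obtain ⟨y, rfl⟩ := hp x
    rw [hl', LinearMap.sub_apply, map_sub, hl]
    have : g ((LinearMap.ker g).subtype (β y)) = 0 := (β y).2
    rw [LinearMap.comp_apply, LinearMap.comp_apply, this, sub_zero]
  intro M hM
  obtain ⟨n, φ0, hφ0⟩ := hfac M hM
  let c := Module.finBasis k (P1.carrier →ₗ[A] M.carrier)
  let N1 : FDMod k A := pi fun _ : Fin (finrank k (P1.carrier →ₗ[A] M.carrier)) => P1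
  let φ1 : N1.carrier →ₗ[A] M.carrier := ∑ i, c i ∘ₗ LinearMap.proj i
  have hφ1 : ∀ γ : P1.carrier →ₗ[A] M.carrier, ∃ γ' : P1.carrier →ₗ[A] N1.carrier,
      ∀ x, φ1 (γ' x) = γ x := by
    intro γ
    refine ⟨LinearMap.pi fun i => c.repr γ i • LinearMap.id, fun x => ?_⟩
    conv_rhs => rw [← c.sum_repr γ]
    simp only [φ1, LinearMap.sum_apply, LinearMap.comp_apply, LinearMap.smul_apply]
    refine Finset.sum_congr rfl fun i _ => ?_
    exact ((c i).restrictScalars k).map_smul _ _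
  let Q : FDMod k A := prd (pi fun _ : Fin n => Q0) N1
  have hQ : T Q := hT.prd_mem (hT.pi_mem _ fun _ => hQ0) (hT.pi_mem _ fun _ => hP1)
  have hQ' : ExtProj T Q :=
    ExtProj.prd_mem (ExtProj.pi_mem _ fun _ => hQ0') (ExtProj.pi_mem _ fun _ => hP1')
  let φ : Q.carrier →ₗ[A] M.carrier := φ0.coprod φ1
  have hφ : Function.Surjective φ := by
    intro x
    obtain ⟨y, rfl⟩ := hφ0 x
    refine ⟨(y, 0), ?_⟩
    change φ0 y + φ1 0 = φ0 y
    rw [map_zero, add_zero]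
  refine ⟨Q, hQ, hQ', φ, hφ, ?_⟩
  obtain ⟨t, htX, htT, hrad⟩ := hT.radical (LinearMap.ker φ)
  have key : LinearMap.ker φ ≤ t := by
    intro x hx
    have hE : T (quo t) := hT.quot (X := Q) (Y := quo t) t.mkQ t.mkQ_surjective hQ
    obtain ⟨β, hβ⟩ := huniv _ hE (t.mkQ x)
    let φb : (quo t).carrier →ₗ[A] M.carrier := t.liftQ φ htX
    obtain ⟨γ, hγ⟩ := hfactor M (φb ∘ₗ β) (by
      rw [LinearMap.comp_apply, hβ]; exact hx)
    obtain ⟨γ', hγ'⟩ := hφ1 γ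
    let γ'' : P1.carrier →ₗ[A] Q.carrier := LinearMap.inr A _ _ ∘ₗ γ'
    have hγ'' : ∀ x, φ (γ'' x) = γ x := by
      intro x
      change φ0 0 + φ1 (γ' x) = γ x
      rw [map_zero, zero_add, hγ']
    have h0 := hrad P0 hP0 (β - t.mkQ ∘ₗ γ'' ∘ₗ p) (by
      rintro _ ⟨y, rfl⟩
      obtain ⟨z, hz⟩ := t.mkQ_surjective ((β - t.mkQ ∘ₗ γ'' ∘ₗ p) y)
      refine ⟨z, ?_, hz⟩
      have h3 : φ z = φb (t.mkQ z) := rfl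
      change φ z = 0
      rw [h3, hz, LinearMap.sub_apply, map_sub]
      have h4 : φb ((t.mkQ ∘ₗ γ'' ∘ₗ p) y) = φ (γ'' (p y)) := rfl
      rw [h4, hγ'', hγ, LinearMap.comp_apply, sub_self])
    have h5 := LinearMap.congr_fun h0 e
    have h6 : (β - t.mkQ ∘ₗ γ'' ∘ₗ p) e = t.mkQ x := by
      rw [LinearMap.sub_apply, hβ, LinearMap.comp_apply, LinearMap.comp_apply, hpe, map_zero,
        map_zero, sub_zero]
    rw [h6] at h5
    simpa using h5
  rw [le_antisymm key htX]
  exact htT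

end
end HO

namespace HO
section
variable {k A : Type u} [Field k] [Ring A] [Algebra k A]

theorem factor_surj {X Y Z : FDMod k A} (φ : X.carrier →ₗ[A] Y.carrier)
    (hφ : Function.Surjective φ) (h : X.carrier →ₗ[A] Z.carrier)
    (hk : ∀ x, φ x = 0 → h x = 0) :
    ∃ h' : Y.carrier →ₗ[A] Z.carrier, ∀ x, h' (φ x) = h x := by
  refine ⟨((LinearMap.ker φ).liftQ h hk) ∘ₗ
    (φ.quotKerEquivOfSurjective hφ).symm.toLinearMap, fun x => ?_⟩
  have e : (φ.quotKerEquivOfSurjective hφ).symm (φ x) = Submodule.Quotient.mk x := by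
    rw [LinearEquiv.symm_apply_eq]; simp
  simp only [LinearMap.comp_apply, LinearEquiv.coe_coe, e]
  rfl

/-- the mutation step -/
theorem enough0_step {T T' : FDMod k A → Prop} (hT' : IsTors T') (hE : Enough T')
    (B : FDMod k A)
    (hsurj : ∀ Z, T' Z → ∀ g : Z.carrier →ₗ[A] B.carrier, g ≠ 0 → Function.Surjective g)
    (hker : ∀ Z, T' Z → ∀ g : Z.carrier →ₗ[A] B.carrier, g ≠ 0 → T' (sub (LinearMap.ker g)))
    (hT : ∀ M, T M ↔ (T' M ∧ ∀ g : M.carrier →ₗ[A] B.carrier, g = 0)) : Enough0 T := by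
  classical
  intro M hM
  have hM' := (hT M).1 hM
  have hex : ∃ n : ℕ, ∃ Q : FDMod k A, dm Q = n ∧ T' Q ∧ ExtProj T' Q ∧
      ∃ φ : Q.carrier →ₗ[A] M.carrier, Function.Surjective φ ∧ T' (sub (LinearMap.ker φ)) := by
    obtain ⟨Q, h⟩ := hE M hM'.1
    exact ⟨_, Q, rfl, h⟩
  obtain ⟨Q, hQn, hQ, hQ', φ, hφ, hk⟩ := Nat.find_spec hex
  suffices hz : ∀ g : Q.carrier →ₗ[A] B.carrier, g = 0 from
    ⟨Q, (hT Q).2 ⟨hQ, hz⟩, hQ'.mono fun X hX => ((hT X).1 hX).1, φ, hφ⟩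
  intro g
  by_contra hg
  by_cases h0 : g ∘ₗ (LinearMap.ker φ).subtype = 0
  · obtain ⟨g', hg'⟩ := factor_surj φ hφ g (fun x hx => LinearMap.congr_fun h0 ⟨x, hx⟩)
    apply hg
    ext x
    rw [← hg', hM'.2 g']; rfl
  · have hs := hsurj (sub (LinearMap.ker φ)) hk _ h0
    have hk2 := hker (sub (LinearMap.ker φ)) hk _ h0
    let K := LinearMap.ker g
    let φK : (sub K).carrier →ₗ[A] M.carrier := φ ∘ₗ K.subtype
    have hφK : Function.Surjective φK := by
      intro m
      obtain ⟨q, rfl⟩ := hφ m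
      obtain ⟨x, hx⟩ := hs (g q)
      have hx' : g x.1 = g q := hx
      refine ⟨⟨q - x.1, ?_⟩, ?_⟩
      · rw [LinearMap.mem_ker, map_sub, hx', sub_self]
      · have : φ x.1 = 0 := x.2
        change φ (q - x.1) = φ q
        rw [map_sub, this, sub_zero]
    have hkK : T' (sub (LinearMap.ker φK)) := by
      let r : (sub (M := sub (LinearMap.ker φ))
          (LinearMap.ker (g ∘ₗ (LinearMap.ker φ).subtype))).carrier →ₗ[A]
          (sub (LinearMap.ker φK)).carrier :=
        LinearMap.codRestrict (LinearMap.ker φK)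
          (LinearMap.codRestrict K ((LinearMap.ker φ).subtype ∘ₗ
            (LinearMap.ker (g ∘ₗ (LinearMap.ker φ).subtype)).subtype) (fun x => x.2))
          (fun x => x.1.2)
      refine hT'.quot r ?_ hk2
      rintro ⟨⟨x, hx1⟩, hx2⟩
      exact ⟨⟨⟨x, hx2⟩, hx1⟩, rfl⟩
    obtain ⟨l, hl⟩ := hQ' φK hφK hkK φ
    let η : Q.carrier →ₗ[A] Q.carrier := K.subtype ∘ₗ l
    have hη : ∀ x, φ (η x) = φ x := hl
    have hgη : ∀ x, g (η x) = 0 := fun x => (l x).2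
    obtain ⟨e, he, her, heφ⟩ := fitting η
    have heφ := heφ M φ hη
    have hne : LinearMap.range e ≠ ⊤ := by
      intro h
      apply hg
      ext x
      have : x ∈ LinearMap.range e := h ▸ trivial
      obtain ⟨y, rfl⟩ := her this
      exact hgη y
    have hlt := sub_dm_lt _ hne
    rw [hQn] at hlt
    refine Nat.find_min hex hlt ⟨sub (LinearMap.range e), rfl, hT'.sub_of_range e hQ _ rfl,
      hQ'.retract (N := sub (LinearMap.range e)) (LinearMap.range e).subtype e.rangeRestrict ?_,
      φ ∘ₗ (LinearMap.range e).subtype, ?_, ?_⟩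
    · rintro ⟨_, y, rfl⟩
      apply Subtype.ext
      exact he y
    · intro m
      obtain ⟨q, rfl⟩ := hφ m
      exact ⟨⟨e q, q, rfl⟩, heφ q⟩
    · let r : (sub (LinearMap.ker φ)).carrier →ₗ[A]
          (sub (M := sub (LinearMap.range e))
            (LinearMap.ker (φ ∘ₗ (LinearMap.range e).subtype))).carrier :=
        LinearMap.codRestrict _ (e.rangeRestrict ∘ₗ (LinearMap.ker φ).subtype)
          (fun x => (heφ x.1).trans x.2)
      refine hT'.quot r ?_ hk
      rintro ⟨⟨_, y, rfl⟩, hx⟩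
      have hx' : φ (e y) = 0 := hx
      refine ⟨⟨e y, hx'⟩, ?_⟩
      apply Subtype.ext
      apply Subtype.ext
      exact he y

theorem enough_step [IsAlgClosed k] {m : ℕ} {f : Fin m → FDMod k A}
    (hf : ∀ N : FDMod k A, N.IsBrick → ∃ i, N.Iso (f i))
    {T T' : FDMod k A → Prop} (hT : IsTors T) (hT' : IsTors T') (hE : Enough T')
    (hle : ∀ X, T X → T' X) (hne : ¬ ∀ X, T' X → T X)
    (hmax : ∀ U : FDMod k A → Prop, IsTors U → (∀ X, T X → U X) → (∀ X, U X → T' X) →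
      (∀ X, U X → T X) ∨ (∀ X, T' X → U X)) : Enough T := by
  classical
  push Not at hne
  obtain ⟨X0, hX0, hX0'⟩ := hne
  obtain ⟨B, hB, hBn, hTB, hsurj⟩ := exists_min hT hT' hX0 hX0'
  have hid : ∀ C : FDMod k A, Nontrivial C.carrier →
      (LinearMap.id : C.carrier →ₗ[A] C.carrier) ≠ 0 := by
    intro C hC h
    obtain ⟨x, hx⟩ := exists_ne (0 : C.carrier)
    exact hx (LinearMap.congr_fun h x)
  have hTiff : ∀ M, T M ↔ (T' M ∧ ∀ g : M.carrier →ₗ[A] B.carrier, g = 0) := by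
    intro M
    refine ⟨fun h => ⟨hle M h, hTB M h⟩, fun h => ?_⟩
    rcases hmax _ (hT'.inter_perp (fun N => N = B))
      (fun X hX => ⟨hle X hX, by rintro N rfl; exact hTB X hX⟩) (fun X hX => hX.1) with h1 | h1
    · exact h1 M ⟨h.1, by rintro N rfl; exact h.2⟩
    · exact absurd ((h1 B hB).2 B rfl LinearMap.id) (hid B hBn)
  have hker : ∀ Z, T' Z → ∀ g : Z.carrier →ₗ[A] B.carrier, g ≠ 0 →
      T' (sub (LinearMap.ker g)) := by
    intro Z hZ g hg
    obtain ⟨t, htX, htT, hrad⟩ := hT'.radical (LinearMap.ker g)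
    have hgs := hsurj Z hZ g hg
    let E : FDMod k A := quo t
    have hEE : T' E := hT'.quot (X := Z) (Y := E) t.mkQ t.mkQ_surjective hZ
    let gb : E.carrier →ₗ[A] B.carrier := t.liftQ g htX
    have hgbs : Function.Surjective gb := by
      intro b
      obtain ⟨z, rfl⟩ := hgs b
      exact ⟨t.mkQ z, rfl⟩
    have hr : ∀ Y, T' Y → ∀ h : Y.carrier →ₗ[A] E.carrier, (∀ y, gb (h y) = 0) → h = 0 := by
      intro Y hY h hh
      refine hrad Y hY h ?_
      rintro _ ⟨y, rfl⟩
      obtain ⟨z, hz⟩ := t.mkQ_surjective (h y)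
      refine ⟨z, ?_, hz⟩
      have : gb (t.mkQ z) = g z := rfl
      have h2 := hh y
      rw [← hz, this] at h2
      exact h2
    have hEn : Nontrivial E.carrier := hgbs.nontrivial
    have hBE : ∃ b : B.carrier →ₗ[A] E.carrier, b ≠ 0 := by
      by_contra hcon
      push Not at hcon
      rcases hmax _ (hT'.inter_perp (fun N => N = E))
        (fun X hX => ⟨hle X hX, by
          rintro N rfl h
          exact hr X (hle X hX) h
            (fun y => LinearMap.congr_fun (hTB X hX (gb ∘ₗ h)) y)⟩) (fun X hX => hX.1) with h1 | h1
      · have : T B := h1 B ⟨hB, by rintro N rfl; exact hcon⟩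
        exact absurd (hTB B this LinearMap.id) (hid B hBn)
      · exact absurd ((h1 E hEE).2 E rfl LinearMap.id) (hid E hEn)
    obtain ⟨b, hb⟩ := hBE
    have hgb : gb ∘ₗ b ≠ 0 := fun h => hb (hr B hB b fun y => LinearMap.congr_fun h y)
    have hsj := hsurj B hB _ hgb
    have hij : Function.Injective (gb ∘ₗ b) := by
      have : Function.Injective ((gb ∘ₗ b).restrictScalars k) :=
        LinearMap.injective_iff_surjective.2 hsj
      exact this
    let u := LinearEquiv.ofBijective (gb ∘ₗ b) ⟨hij, hsj⟩
    let s : B.carrier →ₗ[A] E.carrier := b ∘ₗ u.symm.toLinearMap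
    have hs : ∀ y, gb (s y) = y := fun y => u.apply_symm_apply y
    have h0 := hr E hEE (LinearMap.id - s ∘ₗ gb) (by
      intro y
      rw [LinearMap.sub_apply, map_sub, LinearMap.comp_apply, hs]; simp)
    have key : LinearMap.ker g ≤ t := by
      intro x hx
      have h1 := LinearMap.congr_fun h0 (t.mkQ x)
      have h2 : gb (t.mkQ x) = 0 := hx
      rw [LinearMap.sub_apply, LinearMap.comp_apply, h2, map_zero, sub_zero] at h1
      have h3 : t.mkQ x = 0 := h1
      simpa using h3
    rw [le_antisymm key htX]
    exact htT
  have hE0 : Enough0 T := enough0_step hT' hE B hsurj hker hTiff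
  have hch : ∀ i, ∃ Q, T Q ∧ ExtProj T Q ∧
      (T (f i) → ∃ φ : Q.carrier →ₗ[A] (f i).carrier, Function.Surjective φ) := by
    intro i
    by_cases h : T (f i)
    · obtain ⟨Q, h1, h2, h3⟩ := hE0 _ h
      exact ⟨Q, h1, h2, fun _ => h3⟩
    · have hz : T (pi (Fin.elim0 : Fin 0 → FDMod k A)) := hT.pi_mem _ (fun i => i.elim0)
      obtain ⟨Q, h1, h2, h3⟩ := hE0 _ hz
      exact ⟨Q, h1, h2, fun h' => absurd h' h⟩
  choose Q hQ hQ' hQs using hch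
  have h1 : T (pi Q) := hT.pi_mem _ hQ
  have h2 : ExtProj T (pi Q) := ExtProj.pi_mem _ hQ'
  refine enough_of_fac hT h1 h2 (le_of_bricks hf (fac_isTors hT h1 h2) hT ?_)
  intro i hi
  obtain ⟨φ, hφ⟩ := hQs i hi
  refine ⟨1, φ ∘ₗ LinearMap.proj i ∘ₗ LinearMap.proj 0, fun x => ?_⟩
  obtain ⟨y, rfl⟩ := hφ x
  exact ⟨fun _ => Pi.single i y, by simp⟩

theorem enough_top [FiniteDimensional k A] : Enough (fun _ : FDMod k A => True) := by
  intro M _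
  obtain ⟨n, φ, hφ⟩ := Module.Finite.exists_fin' A M.carrier
  refine ⟨free k A n, trivial, ?_, φ, hφ, trivial⟩
  intro Y Z g hg _ h
  obtain ⟨l, hl⟩ := Module.projective_lifting_property g h hg
  exact ⟨l, fun x => LinearMap.congr_fun hl x⟩

theorem enough_all [IsAlgClosed k] [FiniteDimensional k A] (hbf : BrickFinite k A)
    {T0 : FDMod k A → Prop} (h0 : IsTors T0) : Enough T0 := by
  classical
  obtain ⟨m, f, hf⟩ := hbf
  let bs : (FDMod k A → Prop) → Finset (Fin m) := fun T => Finset.univ.filter fun i => T (f i)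
  have hbs : ∀ T i, i ∈ bs T ↔ T (f i) := by intro T i; simp [bs]
  have hex : ∃ n : ℕ, ∃ T, (bs T).card = n ∧ IsTors T ∧ Enough T ∧ ∀ X, T0 X → T X :=
    ⟨_, _, rfl, isTors_top, enough_top, fun _ _ => trivial⟩
  obtain ⟨T', hTn, hT', hE, hle⟩ := Nat.find_spec hex
  by_cases hall : ∀ X, T' X → T0 X
  · have : T' = T0 := funext fun X => propext ⟨hall X, hle X⟩
    rwa [← this]
  exfalso
  let P : (FDMod k A → Prop) → Prop := fun T =>
    IsTors T ∧ (∀ X, T0 X → T X) ∧ (∀ X, T X → T' X) ∧ ¬ ∀ X, T' X → T X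
  have hex2 : ∃ n : ℕ, ∃ T, m - (bs T).card = n ∧ P T :=
    ⟨_, T0, rfl, h0, fun _ h => h, hle, hall⟩
  obtain ⟨T, hTn2, hT, hT0, hTT', hTne⟩ := Nat.find_spec hex2
  have hcard : ∀ U, (bs U).card ≤ m := fun U => (Finset.card_le_univ _).trans (by simp)
  have hET : Enough T := by
    refine enough_step hf hT hT' hE hTT' hTne fun U hU hTU hUT' => ?_
    by_cases h : ∀ X, T' X → U X
    · exact Or.inr h
    · left
      have hge := Nat.find_min' hex2 ⟨U, rfl, hU, fun X hX => hTU X (hT0 X hX), hUT', h⟩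
      rw [← hTn2] at hge
      have hsub : bs T ⊆ bs U := fun i hi => (hbs U i).2 (hTU _ ((hbs T i).1 hi))
      have heq : bs T = bs U := Finset.eq_of_subset_of_card_le hsub (by
        have := hcard U; have := hcard T; omega)
      exact le_of_bricks hf hT hU fun i hi => (hbs T i).1 (heq ▸ (hbs U i).2 hi)
  have hlt : (bs T).card < (bs T').card := by
    apply Finset.card_lt_card
    refine ⟨fun i hi => (hbs T' i).2 (hTT' _ ((hbs T i).1 hi)), fun h => hTne ?_⟩
    exact le_of_bricks hf hT hT' fun i hi => (hbs T i).1 (h ((hbs T' i).2 hi))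
  rw [hTn] at hlt
  exact Nat.find_min hex hlt ⟨T, rfl, hT, hET, hT0⟩

end
end HO

namespace HO
section
variable {k A : Type u} [Field k] [Ring A] [Algebra k A]

/-- minimal relative presentation -/
theorem min_pres [FiniteDimensional k A] (Q : FDMod k A) :
    ∃ (Q0 Q1 : FDMod k A) (p : Q0.carrier →ₗ[A] Q.carrier) (d : Q1.carrier →ₗ[A] Q0.carrier),
      Module.Projective A Q0.carrier ∧ Module.Projective A Q1.carrier ∧ Function.Surjective p ∧
      LinearMap.range d = LinearMap.ker p ∧
      ∀ N : Submodule A Q1.carrier, LinearMap.ker d ⊔ N = ⊤ → N = ⊤ := by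
  classical
  have : Module.Finite A Q.carrier := inferInstance
  obtain ⟨n, p, hp⟩ := Module.Finite.exists_fin' A Q.carrier
  let Q0 := free k A n
  let Ω : FDMod k A := sub (M := Q0) (LinearMap.ker p)
  have hex : ∃ m : ℕ, ∃ Q1 : FDMod k A, dm Q1 = m ∧ Module.Projective A Q1.carrier ∧
      ∃ π : Q1.carrier →ₗ[A] Ω.carrier, Function.Surjective π := by
    have hΩ : Module.Finite A Ω.carrier := ⟨(noeth Ω).noetherian ⊤⟩
    obtain ⟨r, q, hq⟩ := Module.Finite.exists_fin' A Ω.carrier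
    exact ⟨_, free k A r, rfl, inferInstanceAs (Module.Projective A (Fin r → A)), q, hq⟩
  obtain ⟨Q1, hQ1, hproj, π, hπ⟩ := Nat.find_spec hex
  refine ⟨Q0, Q1, p, (LinearMap.ker p).subtype ∘ₗ π,
    inferInstanceAs (Module.Projective A (Fin n → A)), hproj, hp, ?_, ?_⟩
  · rw [LinearMap.range_comp, LinearMap.range_eq_top.2 hπ, Submodule.map_top,
      Submodule.range_subtype]
  intro N hN
  by_contra hNt
  have hkd : LinearMap.ker ((LinearMap.ker p).subtype ∘ₗ π) = LinearMap.ker π := by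
    rw [LinearMap.ker_comp, Submodule.ker_subtype, ← LinearMap.ker]
  rw [hkd] at hN
  have hs : Function.Surjective (π ∘ₗ N.subtype) := by
    intro y
    obtain ⟨x, rfl⟩ := hπ y
    have : x ∈ LinearMap.ker π ⊔ N := hN ▸ trivial
    obtain ⟨a, ha, b, hb, rfl⟩ := Submodule.mem_sup.1 this
    refine ⟨⟨b, hb⟩, ?_⟩
    have ha' : π a = 0 := ha
    simp [ha']
  obtain ⟨l, hl⟩ := Module.projective_lifting_property (π ∘ₗ N.subtype) π hs
  obtain ⟨e, he, her, heφ⟩ := fitting (Q := Q1) (N.subtype ∘ₗ l)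
  have heπ := heφ Ω π (fun x => LinearMap.congr_fun hl x)
  have hne : LinearMap.range e ≠ ⊤ := by
    intro h
    apply hNt
    rw [eq_top_iff, ← h]
    refine her.trans ?_
    rintro _ ⟨x, rfl⟩
    exact (l x).2
  have hlt := sub_dm_lt _ hne
  rw [hQ1] at hlt
  refine Nat.find_min hex hlt ⟨sub (LinearMap.range e), rfl, ?_,
    π ∘ₗ (LinearMap.range e).subtype, ?_⟩
  · refine Module.Projective.of_split (LinearMap.range e).subtype e.rangeRestrict ?_
    ext ⟨_, y, rfl⟩
    exact he y
  · intro y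
    obtain ⟨x, rfl⟩ := hπ y
    exact ⟨⟨e x, x, rfl⟩, heπ x⟩

theorem factor_pres {T : FDMod k A → Prop} (hT : IsTors T) {Q Q0 Q1 : FDMod k A}
    (hQ : ExtProj T Q) (p : Q0.carrier →ₗ[A] Q.carrier) (d : Q1.carrier →ₗ[A] Q0.carrier)
    [Module.Projective A Q0.carrier] (hp : Function.Surjective p)
    (hd : LinearMap.range d = LinearMap.ker p)
    (hsup : ∀ N : Submodule A Q1.carrier, LinearMap.ker d ⊔ N = ⊤ → N = ⊤)
    {M : FDMod k A} (hM : T M) : ∀ (n : ℕ) (f : Q1.carrier →ₗ[A] M.carrier),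
      dm (sub (LinearMap.range f)) = n →
      ∃ g : Q0.carrier →ₗ[A] M.carrier, ∀ x, g (d x) = f x := by
  intro n
  induction n using Nat.strong_induction_on with
  | _ n ih =>
  intro f hn
  by_cases hf : f = 0
  · exact ⟨0, by simp [hf]⟩
  let w : Q1.carrier →ₗ[A] (Q0.carrier × M.carrier) := d.prod (-f)
  let W : Submodule A (prd Q0 M).carrier := LinearMap.range w
  let Y : FDMod k A := quo W
  have hpd : ∀ x, p (d x) = 0 := fun x => by
    have : d x ∈ LinearMap.ker p := hd ▸ ⟨x, rfl⟩
    exact this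
  let pb : Y.carrier →ₗ[A] Q.carrier := W.liftQ (p ∘ₗ LinearMap.fst A _ _) (by
    rintro _ ⟨x, rfl⟩
    exact hpd x)
  have hpb : ∀ z, pb (W.mkQ z) = p z.1 := fun z => rfl
  let j : M.carrier →ₗ[A] Y.carrier := W.mkQ ∘ₗ LinearMap.inr A _ _
  let i : Q0.carrier →ₗ[A] Y.carrier := W.mkQ ∘ₗ LinearMap.inl A _ _
  have hij : ∀ x, i (d x) = j (f x) := by
    intro x
    change W.mkQ (d x, 0) = W.mkQ (0, f x)
    rw [← sub_eq_zero, ← map_sub, Submodule.mkQ_apply, Submodule.Quotient.mk_eq_zero]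
    exact ⟨x, by simp [w]⟩
  have hj0 : ∀ m, j m = 0 → ∃ x, d x = 0 ∧ f x = m := by
    intro m h
    have h' : ((0, m) : Q0.carrier × M.carrier) ∈ W := (Submodule.Quotient.mk_eq_zero W).1 h
    obtain ⟨x, hx⟩ := h'
    refine ⟨-x, ?_, ?_⟩
    · have := congrArg Prod.fst hx
      simpa [w] using this
    · have := congrArg Prod.snd hx
      simpa [w] using this
  have hpbs : Function.Surjective pb := by
    intro q
    obtain ⟨x, rfl⟩ := hp q
    exact ⟨W.mkQ (x, 0), rfl⟩
  have hker : LinearMap.range j = LinearMap.ker pb := by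
    ext y
    constructor
    · rintro ⟨m, rfl⟩
      change pb (W.mkQ (0, m)) = 0
      rw [hpb]; simp
    · intro hy
      obtain ⟨⟨a, m⟩, rfl⟩ := W.mkQ_surjective y
      have ha : a ∈ LinearMap.ker p := hy
      rw [← hd] at ha
      obtain ⟨x, rfl⟩ := ha
      refine ⟨f x + m, ?_⟩
      rw [map_add, ← hij]
      change W.mkQ (d x, 0) + W.mkQ (0, m) = _
      rw [← map_add]; simp
  obtain ⟨s, hs⟩ := hQ (Y := Y) (Z := Q) pb hpbs (hT.sub_of_range j hM _ hker) LinearMap.id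
  have hin : ∀ x, (i - s ∘ₗ p) x ∈ LinearMap.range j := by
    intro x
    rw [hker, LinearMap.mem_ker, LinearMap.sub_apply, map_sub]
    change pb (W.mkQ (x, 0)) - pb (s (p x)) = 0
    rw [hpb, hs]
    exact sub_self (p x)
  obtain ⟨g, hg⟩ := Module.projective_lifting_property j.rangeRestrict
    ((i - s ∘ₗ p).codRestrict _ hin) j.surjective_rangeRestrict
  have hg' : ∀ x, j (g x) = i x - s (p x) := fun x =>
    congrArg Subtype.val (LinearMap.congr_fun hg x)
  let fres := f - g ∘ₗ d
  have hf' : LinearMap.range fres ≤ (LinearMap.ker d).map f := by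
    rintro _ ⟨x, rfl⟩
    obtain ⟨y, hy, hfy⟩ := hj0 (fres x) (by
      change j (f x - g (d x)) = 0
      rw [map_sub, hg', hpd, hij]; simp)
    exact ⟨y, hy, hfy⟩
  have hlt : LinearMap.range fres < LinearMap.range f := by
    refine lt_of_le_of_ne (hf'.trans LinearMap.map_le_range) ?_
    intro h
    apply hf
    rw [← LinearMap.ker_eq_top]
    apply hsup
    rw [eq_top_iff]
    intro x _
    have : f x ∈ (LinearMap.ker d).map f := hf' (h ▸ ⟨x, rfl⟩)
    obtain ⟨y, hy, hfy⟩ := this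
    exact Submodule.mem_sup.2 ⟨y, hy, x - y, by simp [hfy], by simp⟩
  obtain ⟨g', hg2⟩ := ih _ (hn ▸ sub_dm_lt_sub _ _ hlt) fres rfl
  refine ⟨g' + g, fun x => ?_⟩
  rw [LinearMap.add_apply, hg2]
  simp [fres]

/-- dimension of a Hom space -/
noncomputable def hm (P M : FDMod k A) : ℕ := finrank k (P.carrier →ₗ[A] M.carrier)

/-- precomposition -/
def pre {P P' : FDMod k A} (M : FDMod k A) (d : P.carrier →ₗ[A] P'.carrier) :
    (P'.carrier →ₗ[A] M.carrier) →ₗ[k] (P.carrier →ₗ[A] M.carrier) where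
  toFun h := h ∘ₗ d
  map_add' _ _ := rfl
  map_smul' _ _ := rfl

/-- postcomposition -/
def post (P : FDMod k A) {M N : FDMod k A} (d : M.carrier →ₗ[A] N.carrier) :
    (P.carrier →ₗ[A] M.carrier) →ₗ[k] (P.carrier →ₗ[A] N.carrier) where
  toFun h := d ∘ₗ h
  map_add' _ _ := by ext; simp
  map_smul' c h := by
    ext x
    exact (d.restrictScalars k).map_smul c (h x)

theorem hm_exact (P : FDMod k A) [Module.Projective A P.carrier] {L M N : FDMod k A}
    (f : L.carrier →ₗ[A] M.carrier) (g : M.carrier →ₗ[A] N.carrier) (hf : Function.Injective f)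
    (hg : Function.Surjective g) (hfg : ∀ y, g y = 0 ↔ ∃ x, f x = y) :
    hm P M = hm P L + hm P N := by
  have h1 : Function.Injective (post P f) := by
    intro a b hab
    ext x
    exact hf (LinearMap.congr_fun hab x)
  have h2 : Function.Surjective (post P g) := by
    intro h
    obtain ⟨h', hh⟩ := Module.projective_lifting_property g h hg
    exact ⟨h', hh⟩
  have h3 : LinearMap.range (post P f) = LinearMap.ker (post P g) := by
    ext h
    constructor
    · rintro ⟨l, rfl⟩
      ext x
      exact (hfg _).2 ⟨_, rfl⟩
    · intro hh
      have hx : ∀ x, h x ∈ LinearMap.range f := fun x =>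
        (hfg _).1 (LinearMap.congr_fun (show post P g h = 0 from hh) x)
      obtain ⟨l, hl⟩ := Module.projective_lifting_property f.rangeRestrict (h.codRestrict _ hx)
        f.surjective_rangeRestrict
      refine ⟨l, ?_⟩
      ext x
      exact congrArg Subtype.val (LinearMap.congr_fun hl x)
  have := LinearMap.finrank_range_add_finrank_ker (post P g)
  rw [← h3, LinearMap.finrank_range_of_inj h1, LinearMap.range_eq_top.2 h2, finrank_top] at this
  unfold hm
  omega

theorem hm_congr (P : FDMod k A) {M N : FDMod k A} (e : M.carrier ≃ₗ[A] N.carrier) :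
    hm P M = hm P N := by
  have : Function.Bijective (post P e.toLinearMap) := by
    constructor
    · intro a b hab
      ext x
      exact e.injective (LinearMap.congr_fun hab x)
    · intro h
      refine ⟨e.symm.toLinearMap ∘ₗ h, ?_⟩
      ext x
      exact e.apply_symm_apply _
  exact (LinearEquiv.ofBijective _ this).finrank_eq

theorem subquot_of_quo {S M : FDMod k A} (L : Submodule A M.carrier)
    (h : S.IsSubquotientOf (quo L)) : S.IsSubquotientOf M := by
  obtain ⟨q, p, ⟨e⟩⟩ := h
  let q' : Submodule A M.carrier := q.comap L.mkQ
  let r : q' →ₗ[A] q := (L.mkQ ∘ₗ q'.subtype).codRestrict q (fun x => x.2)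
  have hr : Function.Surjective r := by
    rintro ⟨y, hy⟩
    obtain ⟨x, rfl⟩ := L.mkQ_surjective y
    exact ⟨⟨x, hy⟩, rfl⟩
  have hs : Function.Surjective (e.toLinearMap ∘ₗ p.mkQ ∘ₗ r) :=
    e.surjective.comp (p.mkQ_surjective.comp hr)
  exact ⟨q', _, ⟨LinearMap.quotKerEquivOfSurjective _ hs⟩⟩

theorem mult {σ : Type u} [Fintype σ] (S : σ → FDMod k A)
    (hcomplete : ∀ T : FDMod k A, IsSimpleModule A T.carrier → ∃ i, T.Iso (S i)) :
    ∀ (n : ℕ) (M : FDMod k A), dm M = n → ∃ m : σ → ℕ,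
      (∀ s, m s ≠ 0 → (S s).IsSubquotientOf M) ∧
      ∀ P : FDMod k A, Module.Projective A P.carrier → hm P M = ∑ s, m s * hm P (S s) := by
  classical
  intro n
  induction n using Nat.strong_induction_on with
  | _ n ih =>
  intro M hn
  rcases subsingleton_or_nontrivial M.carrier with hM | hM
  · refine ⟨0, fun s h => absurd rfl h, fun P _ => ?_⟩
    have : Subsingleton (P.carrier →ₗ[A] M.carrier) := ⟨fun a b => by
      ext x; exact Subsingleton.elim _ _⟩
    simp only [hm, Pi.zero_apply, zero_mul, Finset.sum_const_zero]
    exact finrank_zero_of_subsingleton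
  obtain ⟨L, hL⟩ := IsAtomic.exists_atom (Submodule A M.carrier)
  have hLs : IsSimpleModule A L := isSimpleModule_iff_isAtom.2 hL
  obtain ⟨t, ⟨e⟩⟩ := hcomplete (sub L) hLs
  have hlt : dm (quo L) < n := by
    have h1 := Submodule.finrank_quotient_add_finrank (L.restrictScalars k)
    have h2 : 0 < finrank k (L.restrictScalars k) := by
      have : Nontrivial (L.restrictScalars k) := IsSimpleModule.nontrivial A L
      exact finrank_pos
    have h3 : finrank k (M.carrier ⧸ L.restrictScalars k) = dm (quo L) := rfl
    have h4 : finrank k M.carrier = n := hn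
    omega
  obtain ⟨m, hm1, hm2⟩ := ih _ hlt (quo L) rfl
  refine ⟨fun s => m s + if s = t then 1 else 0, fun s hs => ?_, fun P hP => ?_⟩
  · by_cases h : m s = 0
    · have : s = t := by
        by_contra h'
        simp [h, h'] at hs
      subst this
      exact ⟨L, ⊥, ⟨(Submodule.quotEquivOfEqBot _ rfl).trans e⟩⟩
    · exact subquot_of_quo L (hm1 s h)
  · have := hm_exact P (L := sub L) (M := M) (N := quo L) L.subtype L.mkQ L.injective_subtype
      L.mkQ_surjective (by
        intro y
        simp)
    rw [this, hm2 P hP, hm_congr P e]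
    simp [add_mul, Finset.sum_add_distrib, add_comm]

theorem theta [IsAlgClosed k] [FiniteDimensional k A] (hbf : BrickFinite k A)
    {T : FDMod k A → Prop} (hT : IsTors T) {X : FDMod k A} (hX : T X) (hn : Nontrivial X.carrier) :
    ∃ Q0 Q1 : FDMod k A, Module.Projective A Q0.carrier ∧ Module.Projective A Q1.carrier ∧
      hm Q1 X < hm Q0 X ∧ (∀ M, T M → hm Q1 M ≤ hm Q0 M) ∧
      ∀ N, (∀ M, T M → ∀ f : M.carrier →ₗ[A] N.carrier, f = 0) → hm Q0 N ≤ hm Q1 N := by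
  obtain ⟨Q, hQT, hQ, φ, hφ, -⟩ := enough_all hbf hT X hX
  obtain ⟨Q0, Q1, p, d, hQ0, hQ1, hp, hd, hsup⟩ := min_pres Q
  have hpd : ∀ x, p (d x) = 0 := fun x => by
    have : d x ∈ LinearMap.ker p := hd ▸ ⟨x, rfl⟩
    exact this
  have hsur : ∀ M, T M → Function.Surjective (pre M d) := by
    intro M hM f
    obtain ⟨g, hg⟩ := factor_pres hT hQ p d hp hd hsup hM _ f rfl
    exact ⟨g, LinearMap.ext hg⟩
  refine ⟨Q0, Q1, hQ0, hQ1, ?_, ?_, ?_⟩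
  · have h1 := LinearMap.finrank_range_add_finrank_ker (pre X d)
    rw [LinearMap.range_eq_top.2 (hsur X hX), finrank_top] at h1
    have h2 : 0 < finrank k (LinearMap.ker (pre X d)) := by
      rw [Module.finrank_pos_iff, Submodule.nontrivial_iff_ne_bot]
      intro hb
      have hmem : φ ∘ₗ p ∈ LinearMap.ker (pre X d) := by
        rw [LinearMap.mem_ker]
        ext x
        change φ (p (d x)) = 0
        rw [hpd, map_zero]
      rw [hb, Submodule.mem_bot] at hmem
      obtain ⟨y, hy⟩ := exists_ne (0 : X.carrier)
      obtain ⟨z, rfl⟩ := (hφ.comp hp) y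
      exact hy (LinearMap.congr_fun hmem z)
    unfold hm
    omega
  · intro M hM
    exact LinearMap.finrank_le_finrank_of_surjective (hsur M hM)
  · intro N hN
    apply LinearMap.finrank_le_finrank_of_injective (f := pre N d)
    rw [← LinearMap.ker_eq_bot, eq_bot_iff]
    intro h hh
    have hh' : ∀ x, h (d x) = 0 := fun x => LinearMap.congr_fun (show pre N d h = 0 from hh) x
    obtain ⟨h', he⟩ := factor_surj p hp h (fun x hx => by
      have : x ∈ LinearMap.range d := hd ▸ hx
      obtain ⟨y, rfl⟩ := this
      exact hh' y)
    rw [Submodule.mem_bot]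
    ext x
    rw [← he, hN Q hQT h']
    rfl

theorem no_relation [IsAlgClosed k] [FiniteDimensional k A] (hbf : BrickFinite k A)
    {σ : Type u} [Fintype σ] (S : σ → FDMod k A) {I : Type v} (X : I → FDMod k A)
    (hX : HomOrthFamily X) (m : I → σ → ℕ)
    (hm2 : ∀ i, ∀ P : FDMod k A, Module.Projective A P.carrier →
      hm P (X i) = ∑ s, m i s * hm P (S s))
    (s : Finset I) (c : s → ℚ) (hc : ∀ t, ∑ i, c i * (m i t : ℚ) = 0) (i0 : s) (h0 : 0 < c i0) :
    False := by
  obtain ⟨hnt, -, horth⟩ := hX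
  have hT := (isTors_top (k := k) (A := A)).inter_perp (fun N => ∃ j : s, c j ≤ 0 ∧ N = X j)
  have hpos : ∀ i : s, 0 < c i → True ∧ ∀ N, (∃ j : s, c j ≤ 0 ∧ N = X j) →
      ∀ f : (X i).carrier →ₗ[A] N.carrier, f = 0 := by
    rintro i hi
    refine ⟨trivial, ?_⟩
    rintro _ ⟨j, hj, rfl⟩ f
    refine (horth i j ?_).1 f
    intro h
    have : i = j := Subtype.ext h
    rw [this] at hi
    exact absurd hi (not_lt.2 hj)
  obtain ⟨Q0, Q1, hQ0, hQ1, hlt, hle, hge⟩ := theta hbf hT (hpos i0 h0) (hnt i0)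
  have key : ∑ i : s, c i * ((hm Q0 (X i) : ℚ) - hm Q1 (X i)) = 0 := by
    have h1 : ∀ P : FDMod k A, Module.Projective A P.carrier →
        ∑ i : s, c i * (hm P (X i) : ℚ) = 0 := by
      intro P hP
      have : ∀ i : s, c i * (hm P (X i) : ℚ) = ∑ t, (c i * (m i t : ℚ)) * hm P (S t) := by
        intro i
        rw [hm2 i P hP]
        push_cast
        rw [Finset.mul_sum]
        exact Finset.sum_congr rfl fun t _ => by ring
      rw [Finset.sum_congr rfl fun i _ => this i, Finset.sum_comm]
      refine Finset.sum_eq_zero fun t _ => ?_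
      rw [← Finset.sum_mul, hc t, zero_mul]
    simp only [mul_sub, Finset.sum_sub_distrib, h1 Q0 hQ0, h1 Q1 hQ1, sub_zero]
  have : 0 < ∑ i : s, c i * ((hm Q0 (X i) : ℚ) - hm Q1 (X i)) := by
    refine Finset.sum_pos' (fun i _ => ?_) ⟨i0, Finset.mem_univ _, ?_⟩
    · rcases lt_or_ge 0 (c i) with h | h
      · have : (hm Q1 (X i) : ℚ) ≤ hm Q0 (X i) := by exact_mod_cast hle _ (hpos i h)
        exact mul_nonneg h.le (sub_nonneg.2 this)
      · have : (hm Q0 (X i) : ℚ) ≤ hm Q1 (X i) := by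
          exact_mod_cast hge _ (fun M hM f => hM.2 _ ⟨i, h, rfl⟩ f)
        exact mul_nonneg_of_nonpos_of_nonpos h (sub_nonpos.2 this)
    · have : (hm Q1 (X i0) : ℚ) < hm Q0 (X i0) := by exact_mod_cast hlt
      exact mul_pos h0 (sub_pos.2 this)
  exact this.ne key.symm

end
end HO

/-- Let `A` be a brick-finite finite-dimensional algebra over an
algebraically closed field and let `{X i}` be a Hom-orthogonal set of
finite-dimensional `A`-modules. Then the cardinality of the set is at most the
number of isomorphism classes of simple `A`-modules occurring as a composition
factor of some member of the family. Here `S : σ → FDMod k A` is a complete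
irredundant set of representatives of the simple `A`-modules. -/
theorem stmt3 {k A : Type u} [Field k] [IsAlgClosed k] [Ring A] [Algebra k A]
    [FiniteDimensional k A] (hbf : BrickFinite k A)
    (σ : Type u) [Finite σ] (S : σ → FDMod k A)
    (hsimple : ∀ i, IsSimpleModule A (S i).carrier)
    (hnoniso : ∀ i j, i ≠ j → ¬(S i).Iso (S j))
    (hcomplete : ∀ T : FDMod k A, IsSimpleModule A T.carrier → ∃ i, T.Iso (S i))
    {I : Type v} (X : I → FDMod k A) (hX : HomOrthFamily X) :
    ∀ s : Finset I, s.card ≤ Nat.card {i : σ // ∃ j : I, (S i).IsSubquotientOf (X j)} := by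
  classical
  intro s
  have hσ : Fintype σ := Fintype.ofFinite σ
  choose m hm1 hm2 using fun i => HO.mult S hcomplete _ (X i) rfl
  by_contra hcard
  rw [not_le] at hcard
  let v : s → ({i : σ // ∃ j : I, (S i).IsSubquotientOf (X j)} → ℚ) := fun i t => (m i t.1 : ℚ)
  have hdep : ¬ LinearIndependent ℚ v := by
    intro h
    have h1 := h.fintype_card_le_finrank
    rw [Module.finrank_fintype_fun_eq_card, Fintype.card_coe, ← Nat.card_eq_fintype_card] at h1
    omega
  obtain ⟨c, hc, i0, hi0⟩ := Fintype.not_linearIndependent_iff.1 hdep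
  have hc' : ∀ t, ∑ i : s, c i * (m i t : ℚ) = 0 := by
    intro t
    by_cases ht : ∃ j : I, (S t).IsSubquotientOf (X j)
    · have := congrFun hc ⟨t, ht⟩
      simpa [v, Finset.sum_apply] using this
    · refine Finset.sum_eq_zero fun i _ => ?_
      have : m i t = 0 := by
        by_contra h
        exact ht ⟨i, hm1 i t h⟩
      simp [this]
  rcases lt_or_gt_of_ne hi0 with h | h
  · refine HO.no_relation hbf S X hX m hm2 s (fun i => - c i) (fun t => ?_) i0 (by simpa using h)
    simp only [neg_mul, Finset.sum_neg_distrib, hc' t, neg_zero]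
  · exact HO.no_relation hbf S X hX m hm2 s c hc' i0 h
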